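/- arXiv:1811.08405 — 4 statements merged into one kernel-verified Lean document; each statement's English description precedes it below -/
import Mathlib

section
/- The principal gradation trigonometric R-matrix of U_q(gl₃^) satisfies the Yang–Baxter equation: for all u, v ∈ ℂ with u ≠ 0 and v ≠ 0, R_q,12(u/v) R_q,13(u) R_q,23(v) = R_q,23(v) R_q,13(u) R_q,12(u/v) as endomorphisms of ℂ³ ⊗ ℂ³ ⊗ ℂ³, where for 1 ≤ i < j ≤ 3, R_q,ij(w) acts as R_q(w) on the i-th and j-th tensor factors and as the identity on the remaining factor. -/
open Matrix Kronecker BigOperators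

/-- Elementary 3×3 matrices `E i j`. -/
noncomputable def Eb (i j : Fin 3) : Matrix (Fin 3) (Fin 3) ℂ :=
  Matrix.single i j 1

/-- Principal gradation trigonometric R-matrix of `U_q(gl₃^)`, with spectral
parameter `λ = u³` parametrized by the cube root `u`. -/
noncomputable def RpM (q u : ℂ) : Matrix (Fin 3 × Fin 3) (Fin 3 × Fin 3) ℂ :=
  (∑ k : Fin 3, ∑ p : Fin 3,
    if k = p then (u ^ 3 * q - (u ^ 3 * q)⁻¹) • (Eb k k ⊗ₖ Eb k k)
    else (u ^ 3 - (u ^ 3)⁻¹) • (Eb k k ⊗ₖ Eb p p))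
  + (q - q⁻¹) • ∑ k : Fin 3, ∑ p : Fin 3,
      (if k < p then
        u ^ ((3 : ℤ) - 2 * (((p : ℕ) : ℤ) - ((k : ℕ) : ℤ))) • (Eb k p ⊗ₖ Eb p k)
        + u ^ (2 * (((p : ℕ) : ℤ) - ((k : ℕ) : ℤ)) - (3 : ℤ)) • (Eb p k ⊗ₖ Eb k p)
      else 0)

/-- Action on factors 1 and 2 of `ℂ³ ⊗ ℂ³ ⊗ ℂ³`, identity on factor 3. -/
noncomputable def R12 (R : Matrix (Fin 3 × Fin 3) (Fin 3 × Fin 3) ℂ) :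
    Matrix (Fin 3 × Fin 3 × Fin 3) (Fin 3 × Fin 3 × Fin 3) ℂ :=
  Matrix.of fun x y => R (x.1, x.2.1) (y.1, y.2.1) * (if x.2.2 = y.2.2 then 1 else 0)

/-- Action on factors 1 and 3, identity on factor 2. -/
noncomputable def R13 (R : Matrix (Fin 3 × Fin 3) (Fin 3 × Fin 3) ℂ) :
    Matrix (Fin 3 × Fin 3 × Fin 3) (Fin 3 × Fin 3 × Fin 3) ℂ :=
  Matrix.of fun x y => R (x.1, x.2.2) (y.1, y.2.2) * (if x.2.1 = y.2.1 then 1 else 0)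

/-- Action on factors 2 and 3, identity on factor 1. -/
noncomputable def R23 (R : Matrix (Fin 3 × Fin 3) (Fin 3 × Fin 3) ℂ) :
    Matrix (Fin 3 × Fin 3 × Fin 3) (Fin 3 × Fin 3 × Fin 3) ℂ :=
  Matrix.of fun x y => R (x.2.1, x.2.2) (y.2.1, y.2.2) * (if x.1 = y.1 then 1 else 0)

/-- Weight of the diagonal entry of `RpM q u` in row `(a, b)`. -/
noncomputable def diagWeight (q u : ℂ) (a b : Fin 3) : ℂ :=
  if a = b then u ^ 3 * q - (u ^ 3 * q)⁻¹ else u ^ 3 - (u ^ 3)⁻¹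

/-- Weight of the entry of `RpM q u` in row `(a, b)` and column `(b, a)`, for `a ≠ b`. -/
noncomputable def swapWeight (q u : ℂ) (a b : Fin 3) : ℂ :=
  if a = b then 0
  else if a < b then (q - q⁻¹) * u ^ ((3 : ℤ) - 2 * (((b : ℕ) : ℤ) - ((a : ℕ) : ℤ)))
  else (q - q⁻¹) * u ^ (2 * (((a : ℕ) : ℤ) - ((b : ℕ) : ℤ)) - (3 : ℤ))

theorem RpM_apply (q u : ℂ) (a b c d : Fin 3) :
    RpM q u (a, b) (c, d) =
      diagWeight q u a b * (if a = c ∧ b = d then 1 else 0)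
        + swapWeight q u a b * (if b = c ∧ a = d then 1 else 0) := by
  simp only [RpM, Eb, diagWeight, swapWeight, Fin.sum_univ_three]
  fin_cases a <;> fin_cases b <;>
    simp [Matrix.add_apply, Matrix.smul_apply, Matrix.single_apply, Matrix.kroneckerMap_apply] <;>
    fin_cases c <;> fin_cases d <;> simp

theorem single_vecMul_R12_RpM (q u : ℂ) (a b c : Fin 3) :
    Pi.single (a, b, c) 1 ᵥ* R12 (RpM q u) =
      diagWeight q u a b • Pi.single (a, b, c) 1
        + swapWeight q u a b • Pi.single (b, a, c) 1 := by
  ext ⟨d, e, f⟩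
  simp only [single_one_vecMul, R12, row, of_apply, RpM_apply, Pi.add_apply, Pi.smul_apply,
    Pi.single_apply, Prod.mk.injEq, smul_eq_mul]
  grind

theorem single_vecMul_R13_RpM (q u : ℂ) (a b c : Fin 3) :
    Pi.single (a, b, c) 1 ᵥ* R13 (RpM q u) =
      diagWeight q u a c • Pi.single (a, b, c) 1
        + swapWeight q u a c • Pi.single (c, b, a) 1 := by
  ext ⟨d, e, f⟩
  simp only [single_one_vecMul, R13, row, of_apply, RpM_apply, Pi.add_apply, Pi.smul_apply,
    Pi.single_apply, Prod.mk.injEq, smul_eq_mul]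
  grind

theorem single_vecMul_R23_RpM (q u : ℂ) (a b c : Fin 3) :
    Pi.single (a, b, c) 1 ᵥ* R23 (RpM q u) =
      diagWeight q u b c • Pi.single (a, b, c) 1
        + swapWeight q u b c • Pi.single (a, c, b) 1 := by
  ext ⟨d, e, f⟩
  simp only [single_one_vecMul, R23, row, of_apply, RpM_apply, Pi.add_apply, Pi.smul_apply,
    Pi.single_apply, Prod.mk.injEq, smul_eq_mul]
  grind

/-- the principal gradation trigonometric R-matrix of `U_q(gl₃^)`
satisfies the Yang–Baxter equation. -/
theorem principal_R_matrix_Yang_Baxter (q : ℂ) (hq : q ≠ 0)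
    (u v : ℂ) (hu : u ≠ 0) (hv : v ≠ 0) :
    R12 (RpM q (u / v)) * R13 (RpM q u) * R23 (RpM q v)
      = R23 (RpM q v) * R13 (RpM q u) * R12 (RpM q (u / v)) := by
  refine ext_of_single_vecMul fun ⟨a, b, c⟩ => ?_
  simp only [← vecMul_vecMul, single_vecMul_R12_RpM, single_vecMul_R13_RpM,
    single_vecMul_R23_RpM, add_vecMul, smul_vecMul]
  ext y
  simp only [Pi.add_apply, Pi.smul_apply, smul_eq_mul]
  fin_cases a <;> fin_cases b <;> fin_cases c <;>
    simp [diagWeight, swapWeight] <;> field_simp <;> ring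
end

section
/- The homogeneous gradation trigonometric R-matrix of U_q(gl₃^) satisfies the Yang–Baxter equation: for all λ, μ ∈ ℂ with λ ≠ 0 and μ ≠ 0, R^H_q,12(λ/μ) R^H_q,13(λ) R^H_q,23(μ) = R^H_q,23(μ) R^H_q,13(λ) R^H_q,12(λ/μ) as endomorphisms of ℂ³ ⊗ ℂ³ ⊗ ℂ³, where for 1 ≤ i < j ≤ 3, R^H_q,ij(w) acts as R^H_q(w) on the i-th and j-th tensor factors and as the identity on the remaining factor. -/
open Matrix Kronecker BigOperators

/-- Homogeneous gradation trigonometric R-matrix of `U_q(gl₃^)`. -/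
noncomputable def RhM (q lam : ℂ) : Matrix (Fin 3 × Fin 3) (Fin 3 × Fin 3) ℂ :=
  (∑ k : Fin 3, ∑ p : Fin 3,
    if k = p then (lam * q - (lam * q)⁻¹) • (Eb k k ⊗ₖ Eb k k)
    else (lam - lam⁻¹) • (Eb k k ⊗ₖ Eb p p))
  + (q - q⁻¹) • ∑ k : Fin 3, ∑ p : Fin 3,
      (if k < p then lam • (Eb k p ⊗ₖ Eb p k) + lam⁻¹ • (Eb p k ⊗ₖ Eb k p) else 0)

/-- Coefficient of the identity part of `RhM q l` on the row `(a, b)`. -/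
noncomputable def diagCoeff (q l : ℂ) (a b : Fin 3) : ℂ :=
  if a = b then l * q - (l * q)⁻¹ else l - l⁻¹

/-- Coefficient of the flip part of `RhM q l` on the row `(a, b)`. -/
noncomputable def flipCoeff (q l : ℂ) (a b : Fin 3) : ℂ :=
  if a < b then (q - q⁻¹) * l else if b < a then (q - q⁻¹) * l⁻¹ else 0

theorem RhM_apply (q l : ℂ) (a b c d : Fin 3) :
    RhM q l (a, b) (c, d) = diagCoeff q l a b * (if a = c ∧ b = d then 1 else 0)
      + flipCoeff q l a b * (if b = c ∧ a = d then 1 else 0) := by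
  fin_cases a <;> fin_cases b <;>
    simp [RhM, Eb, diagCoeff, flipCoeff, Fin.sum_univ_three, Matrix.single_apply] <;>
    grind

theorem R12_RhM_mul_apply (q l : ℂ)
    (M : Matrix (Fin 3 × Fin 3 × Fin 3) (Fin 3 × Fin 3 × Fin 3) ℂ)
    (a b c : Fin 3) (y : Fin 3 × Fin 3 × Fin 3) :
    (R12 (RhM q l) * M) (a, b, c) y
      = diagCoeff q l a b * M (a, b, c) y + flipCoeff q l a b * M (b, a, c) y := by
  simp [Matrix.mul_apply, R12, RhM_apply, Fintype.sum_prod_type, add_mul, ite_and,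
    Finset.sum_add_distrib]

theorem R13_RhM_mul_apply (q l : ℂ)
    (M : Matrix (Fin 3 × Fin 3 × Fin 3) (Fin 3 × Fin 3 × Fin 3) ℂ)
    (a b c : Fin 3) (y : Fin 3 × Fin 3 × Fin 3) :
    (R13 (RhM q l) * M) (a, b, c) y
      = diagCoeff q l a c * M (a, b, c) y + flipCoeff q l a c * M (c, b, a) y := by
  simp [Matrix.mul_apply, R13, RhM_apply, Fintype.sum_prod_type, add_mul, ite_and,
    Finset.sum_add_distrib]

theorem R23_RhM_mul_apply (q l : ℂ)
    (M : Matrix (Fin 3 × Fin 3 × Fin 3) (Fin 3 × Fin 3 × Fin 3) ℂ)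
    (a b c : Fin 3) (y : Fin 3 × Fin 3 × Fin 3) :
    (R23 (RhM q l) * M) (a, b, c) y
      = diagCoeff q l b c * M (a, b, c) y + flipCoeff q l b c * M (a, c, b) y := by
  simp [Matrix.mul_apply, R23, RhM_apply, Fintype.sum_prod_type, add_mul, ite_and,
    Finset.sum_add_distrib]

/-- the homogeneous gradation trigonometric R-matrix of `U_q(gl₃^)`
satisfies the Yang–Baxter equation. -/
theorem homogeneous_R_matrix_Yang_Baxter (q : ℂ) (hq : q ≠ 0)
    (lam mu : ℂ) (hlam : lam ≠ 0) (hmu : mu ≠ 0) :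
    R12 (RhM q (lam / mu)) * R13 (RhM q lam) * R23 (RhM q mu)
      = R23 (RhM q mu) * R13 (RhM q lam) * R12 (RhM q (lam / mu)) := by
  rw [← Matrix.mul_one (_ * R23 _), ← Matrix.mul_one (_ * R12 _)]
  simp only [Matrix.mul_assoc]
  ext ⟨a, b, c⟩ y
  simp only [R12_RhM_mul_apply, R13_RhM_mul_apply, R23_RhM_mul_apply]
  generalize (1 : Matrix (Fin 3 × Fin 3 × Fin 3) (Fin 3 × Fin 3 × Fin 3) ℂ) = M
  fin_cases a <;> fin_cases b <;> fin_cases c <;> simp [diagCoeff, flipCoeff] <;> field_simp <;>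
    ring
end

section
/- Assume q ∈ ℂ with q ≠ 0 and q² ≠ 1, and let α, β, γ ∈ ℂ with (β, γ) ≠ (0, 0). Then the cyclic twist matrix K⁽²⁾ = αE₁₃ + βE₂₁ + γE₃₂ satisfies R^H_q(λ)(K⁽²⁾ ⊗ K⁽²⁾) = (K⁽²⁾ ⊗ K⁽²⁾)R^H_q(λ) for all λ ∈ ℂ with λ ≠ 0 if and only if α = 0; the same equivalence holds for K⁽³⁾ = βE₁₂ + γE₂₃ + αE₃₁. -/
open Matrix Kronecker BigOperators

/-- Diagonal twist matrix `K⁽¹⁾ = diag(α, β, γ)`. -/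
noncomputable def Ktw1 (α β γ : ℂ) : Matrix (Fin 3) (Fin 3) ℂ :=
  Matrix.diagonal ![α, β, γ]

/-- Cyclic twist matrix `K⁽²⁾ = αE₁₃ + βE₂₁ + γE₃₂`. -/
noncomputable def Ktw2 (α β γ : ℂ) : Matrix (Fin 3) (Fin 3) ℂ :=
  α • Eb 0 2 + β • Eb 1 0 + γ • Eb 2 1

/-- Cyclic twist matrix `K⁽³⁾ = βE₁₂ + γE₂₃ + αE₃₁`. -/
noncomputable def Ktw3 (α β γ : ℂ) : Matrix (Fin 3) (Fin 3) ℂ :=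
  β • Eb 0 1 + γ • Eb 1 2 + α • Eb 2 0

theorem RhM_apply_s5 (q lam : ℂ) (i j k l : Fin 3) :
    RhM q lam (i, j) (k, l) =
      if i = k ∧ j = l then (if i = j then lam * q - (lam * q)⁻¹ else lam - lam⁻¹)
      else if i = l ∧ j = k then (q - q⁻¹) * (if i < j then lam else lam⁻¹) else 0 := by
  fin_cases i <;> fin_cases j <;> fin_cases k <;> fin_cases l <;>
    simp [RhM, Eb, Fin.sum_univ_three]

theorem Ktw2_eq (α β γ : ℂ) : Ktw2 α β γ = !![0, 0, α; β, 0, 0; 0, γ, 0] := by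
  ext i j
  fin_cases i <;> fin_cases j <;> simp [Ktw2, Eb]

theorem Ktw3_eq (α β γ : ℂ) : Ktw3 α β γ = !![0, β, 0; 0, 0, γ; α, 0, 0] := by
  ext i j
  fin_cases i <;> fin_cases j <;> simp [Ktw3, Eb]

theorem RhM_commute_Ktw2_zero (q lam β γ : ℂ) :
    RhM q lam * (Ktw2 0 β γ ⊗ₖ Ktw2 0 β γ) = (Ktw2 0 β γ ⊗ₖ Ktw2 0 β γ) * RhM q lam := by
  ext ⟨i, j⟩ ⟨k, l⟩
  fin_cases i <;> fin_cases j <;> fin_cases k <;> fin_cases l <;>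
    simp [Matrix.mul_apply, Fintype.sum_prod_type, Fin.sum_univ_three, RhM_apply_s5, Ktw2_eq] <;> ring

theorem RhM_commute_Ktw3_zero (q lam β γ : ℂ) :
    RhM q lam * (Ktw3 0 β γ ⊗ₖ Ktw3 0 β γ) = (Ktw3 0 β γ ⊗ₖ Ktw3 0 β γ) * RhM q lam := by
  ext ⟨i, j⟩ ⟨k, l⟩
  fin_cases i <;> fin_cases j <;> fin_cases k <;> fin_cases l <;>
    simp [Matrix.mul_apply, Fintype.sum_prod_type, Fin.sum_univ_three, RhM_apply_s5, Ktw3_eq] <;> ring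

theorem sub_inv_ne_zero_of_sq_ne_one {q : ℂ} (hq : q ≠ 0) (hq2 : q ^ 2 ≠ 1) : q - q⁻¹ ≠ 0 := by
  intro h
  field_simp at h
  exact hq2 (by linear_combination h)

theorem eq_zero_of_mul_eq_zero_of_pair_ne_zero {α β γ : ℂ} (hβγ : (β, γ) ≠ (0, 0))
    (hβ : α * β = 0) (hγ : α * γ = 0) : α = 0 := by
  by_contra hα
  exact hβγ (Prod.ext ((mul_eq_zero.mp hβ).resolve_left hα) ((mul_eq_zero.mp hγ).resolve_left hα))

theorem mul_eq_zero_of_RhM_commute_Ktw2 {q α β γ : ℂ} (hq : q - q⁻¹ ≠ 0)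
    (h : RhM q 2 * (Ktw2 α β γ ⊗ₖ Ktw2 α β γ) = (Ktw2 α β γ ⊗ₖ Ktw2 α β γ) * RhM q 2) :
    α * β = 0 ∧ α * γ = 0 := by
  have hb := congrFun₂ h (0, 1) (0, 2)
  have hc := congrFun₂ h (0, 2) (1, 2)
  simp [Matrix.mul_apply, Fintype.sum_prod_type, Fin.sum_univ_three, RhM_apply_s5, Ktw2_eq] at hb hc
  constructor <;> refine (mul_eq_zero.mp ?_).resolve_left hq
  · linear_combination (2 / 3) * hb
  · linear_combination (2 / 3) * hc

theorem mul_eq_zero_of_RhM_commute_Ktw3 {q α β γ : ℂ} (hq : q - q⁻¹ ≠ 0)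
    (h : RhM q 2 * (Ktw3 α β γ ⊗ₖ Ktw3 α β γ) = (Ktw3 α β γ ⊗ₖ Ktw3 α β γ) * RhM q 2) :
    α * β = 0 ∧ α * γ = 0 := by
  have hb := congrFun₂ h (0, 2) (0, 1)
  have hc := congrFun₂ h (1, 2) (0, 2)
  simp [Matrix.mul_apply, Fintype.sum_prod_type, Fin.sum_univ_three, RhM_apply_s5, Ktw3_eq] at hb hc
  constructor <;> refine (mul_eq_zero.mp ?_).resolve_left hq
  · linear_combination (2 / 3) * hb
  · linear_combination (2 / 3) * hc

/-- the cyclic twists are symmetries of the homogeneous gradation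
R-matrix if and only if `α = 0`. -/
theorem cyclic_twist_homogeneous_iff (q : ℂ) (hq : q ≠ 0) (hq2 : q ^ 2 ≠ 1)
    (α β γ : ℂ) (hβγ : (β, γ) ≠ (0, 0)) :
    ((∀ lam : ℂ, lam ≠ 0 →
        RhM q lam * (Ktw2 α β γ ⊗ₖ Ktw2 α β γ)
          = (Ktw2 α β γ ⊗ₖ Ktw2 α β γ) * RhM q lam) ↔ α = 0)
    ∧ ((∀ lam : ℂ, lam ≠ 0 →
        RhM q lam * (Ktw3 α β γ ⊗ₖ Ktw3 α β γ)
          = (Ktw3 α β γ ⊗ₖ Ktw3 α β γ) * RhM q lam) ↔ α = 0) := by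
  have hq' := sub_inv_ne_zero_of_sq_ne_one hq hq2
  refine ⟨⟨fun h => ?_, ?_⟩, ⟨fun h => ?_, ?_⟩⟩
  · obtain ⟨hβ, hγ⟩ := mul_eq_zero_of_RhM_commute_Ktw2 hq' (h 2 two_ne_zero)
    exact eq_zero_of_mul_eq_zero_of_pair_ne_zero hβγ hβ hγ
  · rintro rfl lam -
    exact RhM_commute_Ktw2_zero q lam β γ
  · obtain ⟨hβ, hγ⟩ := mul_eq_zero_of_RhM_commute_Ktw3 hq' (h 2 two_ne_zero)
    exact eq_zero_of_mul_eq_zero_of_pair_ne_zero hβγ hβ hγ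
  · rintro rfl lam -
    exact RhM_commute_Ktw3_zero q lam β γ
end

section
/- Assume q ∈ ℂ with q ≠ 0 and q² ≠ 1, and let p ∈ ℂ be a cube root of q (p³ = q). Then the matrix P⁻ := R_q(p⁻¹)/(2(q⁻¹ − q)) ∈ End(ℂ³ ⊗ ℂ³) is given explicitly by P⁻ = (1/2) Σ_{k≠p} E_{kk}⊗E_{pp} − (1/(2p)) (E₁₂⊗E₂₁ + E₂₃⊗E₃₂ + E₃₁⊗E₁₃) − (p/2) (E₂₁⊗E₁₂ + E₃₂⊗E₂₃ + E₁₃⊗E₃₁), and it is an idempotent of trace 3: (P⁻)² = P⁻ and tr(P⁻) = 3. This is the q-deformed antisymmetric projector entering the fusion procedure. -/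
open Matrix Kronecker BigOperators

/-- The `q`-antisymmetrizer on `ℂ³ ⊗ ℂ³`, with `p` a cube root of `q`. -/
noncomputable def qAntisymmetrizer (p : ℂ) : Matrix (Fin 3 × Fin 3) (Fin 3 × Fin 3) ℂ :=
  (1 / 2 : ℂ) • (∑ k : Fin 3, ∑ l : Fin 3, if k ≠ l then Eb k k ⊗ₖ Eb l l else 0)
    - (2 * p)⁻¹ • (Eb 0 1 ⊗ₖ Eb 1 0 + Eb 1 2 ⊗ₖ Eb 2 1 + Eb 2 0 ⊗ₖ Eb 0 2)
    - (p / 2) • (Eb 1 0 ⊗ₖ Eb 0 1 + Eb 2 1 ⊗ₖ Eb 1 2 + Eb 0 2 ⊗ₖ Eb 2 0)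

theorem RpM_inv_eq_smul_qAntisymmetrizer {p : ℂ} (hp : p ≠ 0) :
    RpM (p ^ 3) p⁻¹ = (2 * ((p ^ 3)⁻¹ - p ^ 3)) • qAntisymmetrizer p := by
  have hdiag : p⁻¹ ^ 3 * p ^ 3 = 1 := by rw [← mul_pow, inv_mul_cancel₀ hp, one_pow]
  simp only [RpM, qAntisymmetrizer, hdiag, Fin.sum_univ_three]
  simp
  norm_num
  match_scalars <;> field_simp <;> ring

theorem Eb_mul_Eb (i j k l : Fin 3) : Eb i j * Eb k l = if j = k then Eb i l else 0 := by
  split_ifs with h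
  · subst h
    simp [Eb]
  · simp [Eb, h]

theorem isIdempotentElem_qAntisymmetrizer {p : ℂ} (hp : p ≠ 0) :
    IsIdempotentElem (qAntisymmetrizer p) := by
  simp only [IsIdempotentElem, qAntisymmetrizer, Fin.sum_univ_three]
  simp [mul_add, add_mul, mul_sub, sub_mul, ← mul_kronecker_mul, Eb_mul_Eb]
  match_scalars <;> field_simp <;> ring

theorem trace_qAntisymmetrizer (p : ℂ) : (qAntisymmetrizer p).trace = 3 := by
  simp [qAntisymmetrizer, Fin.sum_univ_three, trace_kronecker, Eb]
  norm_num

/-- explicit form, idempotency and trace of the q-deformed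
antisymmetric projector `P⁻ = R_q(p⁻¹)/(2(q⁻¹ − q))`. -/
theorem q_antisymmetric_projector (q : ℂ) (hq : q ≠ 0) (hq2 : q ^ 2 ≠ 1)
    (p : ℂ) (hp : p ^ 3 = q) :
    (2 * (q⁻¹ - q))⁻¹ • RpM q p⁻¹
      = (1 / 2 : ℂ) • (∑ k : Fin 3, ∑ l : Fin 3, if k ≠ l then Eb k k ⊗ₖ Eb l l else 0)
        - (2 * p)⁻¹ • (Eb 0 1 ⊗ₖ Eb 1 0 + Eb 1 2 ⊗ₖ Eb 2 1 + Eb 2 0 ⊗ₖ Eb 0 2)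
        - (p / 2) • (Eb 1 0 ⊗ₖ Eb 0 1 + Eb 2 1 ⊗ₖ Eb 1 2 + Eb 0 2 ⊗ₖ Eb 2 0)
    ∧ ((2 * (q⁻¹ - q))⁻¹ • RpM q p⁻¹) * ((2 * (q⁻¹ - q))⁻¹ • RpM q p⁻¹)
        = (2 * (q⁻¹ - q))⁻¹ • RpM q p⁻¹
    ∧ ((2 * (q⁻¹ - q))⁻¹ • RpM q p⁻¹).trace = 3 := by
  have hp0 : p ≠ 0 := by
    rintro rfl
    exact hq (by simp [← hp])
  have hc : 2 * (q⁻¹ - q) ≠ 0 := by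
    refine mul_ne_zero two_ne_zero (sub_ne_zero.mpr fun h => hq2 ?_)
    rw [sq]
    nth_rewrite 1 [← h]
    exact inv_mul_cancel₀ hq
  have hR : (2 * (q⁻¹ - q))⁻¹ • RpM q p⁻¹ = qAntisymmetrizer p := by
    rw [← hp] at hc ⊢
    rw [RpM_inv_eq_smul_qAntisymmetrizer hp0, inv_smul_smul₀ hc]
  rw [hR]
  exact ⟨rfl, isIdempotentElem_qAntisymmetrizer hp0, trace_qAntisymmetrizer p⟩
end
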